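/- arXiv:0708.3598 — 2 statements merged into one kernel-verified Lean document; each statement's English description precedes it below -/
import Mathlib

section
/- Let A be a commutative ring and J = (J₁,…,J_ℓ) a sequence generating an ideal I ⊆ A such that the Koszul complex K(A,J) is a resolution of A/I. Then for all i ≥ 0 there are isomorphisms of A/I-modules Tor_i^A(A/I, A/I) ≅ Λ^i_{A/I}(I/I²) and Ext^i_A(A/I, A/I) ≅ Hom_{A/I}(Λ^i_{A/I}(I/I²), A/I). -/
open CategoryTheory
open scoped BigOperators

/-- Coordinate description of the degree-`k` part of the Koszul complex on `ℓ`
generators: an alternating `A`-valued tensor in `k` indices from `Fin ℓ`. -/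
def IsAltTensor {A : Type} [CommRing A] (ℓ k : ℕ)
    (F : (Fin k → Fin ℓ) → A) : Prop :=
  (∀ v : Fin k → Fin ℓ, ¬ Function.Injective v → F v = 0) ∧
  (∀ (v : Fin k → Fin ℓ) (σ : Equiv.Perm (Fin k)),
    F (v ∘ σ) = (Equiv.Perm.sign σ : ℤ) • F v)

/-!
The Koszul resolution of `A ⧸ I` consists of free modules and its differentials have image in `I`
times their target, so they vanish after applying `A ⧸ I ⊗ -` or `Hom(-, A ⧸ I)`. Hence `Tor_i` and
`Ext^i` are the `i`-th terms themselves, free over `A ⧸ I` of rank `ℓ choose i`.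

Exactness in degree one says that every relation among the `J_a` has coefficients in `I`, so the
classes of the `J_a` form a basis of `I ⧸ I ^ 2`, and the exterior power of `I ⧸ I ^ 2` is free of
the same rank.
-/

open scoped TensorProduct

universe u v w

section ProjectiveResolution

variable {C : Type*} [Category C] [Abelian C]

/-- The homology of a complex all of whose differentials vanish. -/
noncomputable def homologyIsoX {ι : Type*} {c : ComplexShape ι}
    (K : HomologicalComplex C c) (hK : ∀ i j, K.d i j = 0) (i : ι) : K.homology i ≅ K.X i :=
  (K.isoHomologyπ _ i rfl (hK _ _)).symm ≪≫ K.iCyclesIso i _ rfl (hK _ _)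

/-- The projective resolution of `Z` given by a degreewise projective chain complex, exact in
positive degrees, together with an augmentation `ε` identifying its cokernel with `Z`. -/
noncomputable def projectiveResolutionOfExact (K : ChainComplex C ℕ) [∀ n, Projective (K.X n)]
    {Z : C} (ε : K.X 0 ⟶ Z) [Epi ε] (w : K.d 1 0 ≫ ε = 0)
    (exact_zero : (ShortComplex.mk _ ε w).Exact) (exact_succ : ∀ n, K.ExactAt (n + 1)) :
    ProjectiveResolution Z where
  complex := K
  π := (K.toSingle₀Equiv Z).symm ⟨ε, w⟩
  quasiIso := ⟨fun n => by
    cases n with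
    | zero =>
      rw [ChainComplex.quasiIsoAt₀_iff,
        ShortComplex.quasiIso_iff_of_zeros' _ (K.shape _ _ (by simp)) rfl rfl]
      have hε : ((K.toSingle₀Equiv Z).symm ⟨ε, w⟩).f 0 = ε :=
        ChainComplex.toSingle₀Equiv_symm_apply_f_zero ε w
      constructor
      · change (ShortComplex.mk (K.d 1 0) (((K.toSingle₀Equiv Z).symm ⟨ε, w⟩).f 0) _).Exact
        simp only [hε]
        exact exact_zero
      · change Epi (((K.toSingle₀Equiv Z).symm ⟨ε, w⟩).f 0)
        rw [hε]
        exact ‹Epi ε›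
    | succ n =>
      rw [quasiIsoAt_iff_exactAt' (hL := ChainComplex.exactAt_succ_single_obj ..)]
      exact exact_succ n⟩

open MonoidalCategory in
/-- `Tor` computed from a projective resolution that becomes a complex with zero differentials
after tensoring with `X`. -/
noncomputable def torIsoTensorObj [MonoidalCategory C] [MonoidalPreadditive C]
    [HasProjectiveResolutions C] (X : C) {Y : C} (P : ProjectiveResolution Y)
    (h : ∀ i j, X ◁ P.complex.d i j = 0) (n : ℕ) :
    ((Tor C n).obj X).obj Y ≅ X ⊗ P.complex.X n :=
  P.isoLeftDerivedObj ((tensoringLeft C).obj X) n ≪≫ homologyIsoX _ h n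

/-- `Ext` computed from a projective resolution that becomes a complex with zero differentials
after applying `Hom(-, Y)`. -/
noncomputable def extIsoHom (R : Type*) [Ring R] [Linear R C] [EnoughProjectives C] {X : C}
    (P : ProjectiveResolution X) (Y : C)
    (h : ∀ i j (f : P.complex.X j ⟶ Y), P.complex.d i j ≫ f = 0) (n : ℕ) :
    ((Ext R C n).obj (Opposite.op X)).obj Y ≅ ModuleCat.of R (P.complex.X n ⟶ Y) :=
  P.isoExt n Y ≪≫ homologyIsoX _ (fun i j => by ext f; exact h j i f) n

end ProjectiveResolution

section AnnihilatedModules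

variable {R N Q : Type*} [CommRing R] [AddCommGroup N] [Module R N] [AddCommGroup Q] [Module R Q]
  {I : Ideal R}

lemma map_eq_zero_of_mem_smul_top (hN : I ≤ Module.annihilator R N) (g : Q →ₗ[R] N) {y : Q}
    (hy : y ∈ I • (⊤ : Submodule R Q)) : g y = 0 := by
  have hNI : I • (⊤ : Submodule R N) = ⊥ :=
    Submodule.le_annihilator_iff.1 (Submodule.annihilator_top (R := R) (M := N) ▸ hN)
  simpa [hNI] using Submodule.smul_top_le_comap_smul_top I g hy

lemma tmul_eq_zero_of_mem_smul_top (hN : I ≤ Module.annihilator R N) (n : N) {y : Q}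
    (hy : y ∈ I • (⊤ : Submodule R Q)) : n ⊗ₜ[R] y = 0 := by
  induction hy using Submodule.smul_induction_on' with
  | smul a ha y _ =>
    rw [← TensorProduct.smul_tmul, Module.mem_annihilator.1 (hN ha), TensorProduct.zero_tmul]
  | add y _ z _ hy hz => rw [TensorProduct.tmul_add, hy, hz, add_zero]

end AnnihilatedModules

/-- Restricting scalars along `algebraMap R S` recovers the given `R`-module structure of a scalar
tower. -/
noncomputable def restrictScalarsOfIso (R : Type u) [CommRing R] (S : Type v) [CommRing S]
    [Algebra R S] (M : Type w) [AddCommGroup M] [Module R M] [Module S M] [IsScalarTower R S M] :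
    (ModuleCat.restrictScalars (algebraMap R S)).obj (ModuleCat.of S M) ≅ ModuleCat.of R M :=
  let e : (ModuleCat.restrictScalars (algebraMap R S)).obj (ModuleCat.of S M) ≃+ M := .refl M
  let e' : (ModuleCat.restrictScalars (algebraMap R S)).obj (ModuleCat.of S M) ≃ₗ[R] M :=
    e.toLinearEquiv fun r (m : M) => algebraMap_smul S r m
  e'.toModuleIso

section Koszul

variable (R : Type*) {M : Type*} [CommRing R] [AddCommGroup M] [Module R M]

/-- The Koszul differential of `x : M`, which contracts an alternating form with `x`. Modelling the
Koszul complex on alternating forms on `M` instead of on the exterior algebra of the dual of `M`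
loses nothing when `M` is finite free: a sequence `J : Fin ℓ → R` is the element `x = J` of
`M = Fin ℓ → R`. -/
def koszulDifferential (x : M) (k : ℕ) : (M [⋀^Fin (k + 1)]→ₗ[R] R) →ₗ[R] (M [⋀^Fin k]→ₗ[R] R) :=
  AlternatingMap.curryLeftLinearMap.flip x

/-- The ideal of values at `x` of the linear forms on `M`; for `x : Fin ℓ → R` it is the ideal
generated by the entries of `x`. -/
def orderIdeal (x : M) : Ideal R := LinearMap.range (Module.Dual.eval R M x)

/-- Acyclicity of the Koszul complex of `x` in positive degrees. -/
def IsKoszulRegular (x : M) : Prop :=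
  ∀ k, Function.Exact (koszulDifferential R x (k + 1)) (koszulDifferential R x k)

/-- Alternating forms in one variable are linear forms. -/
def oneFormEquivDual : (M [⋀^Fin 1]→ₗ[R] R) ≃ₗ[R] Module.Dual R M where
  __ := (AlternatingMap.ofSubsingleton R M R 0).symm
  map_add' _ _ := rfl
  map_smul' _ _ := rfl

/-- Alternating forms in no variables are scalars. -/
def zeroFormEquiv : (M [⋀^Fin 0]→ₗ[R] R) ≃ₗ[R] R :=
  AlternatingMap.constLinearEquivOfIsEmpty.symm

/-- The augmentation of the Koszul complex of `x`, from degree zero onto `R ⧸ orderIdeal R x`. -/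
def koszulAugmentation (x : M) : (M [⋀^Fin 0]→ₗ[R] R) →ₗ[R] R ⧸ orderIdeal R x :=
  (orderIdeal R x).mkQ ∘ₗ (zeroFormEquiv R).toLinearMap

/-- The class in `I ⧸ I ^ 2`, for `I = orderIdeal R x`, of the value at `x` of a linear form. -/
def dualToCotangent (x : M) : Module.Dual R M →ₗ[R] (orderIdeal R x).Cotangent :=
  (orderIdeal R x).toCotangent ∘ₗ (Module.Dual.eval R M x).rangeRestrict

variable {R}

lemma koszulDifferential_comp_koszulDifferential (x : M) (k : ℕ) :
    koszulDifferential R x k ∘ₗ koszulDifferential R x (k + 1) = 0 :=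
  LinearMap.ext fun ω => ω.curryLeft_same x

lemma mem_orderIdeal_smul_top [Module.Projective R M] (x : M) :
    x ∈ orderIdeal R x • (⊤ : Submodule R M) := by
  obtain ⟨s, hs⟩ := Module.projective_def.1 ‹Module.Projective R M›
  have hsum : Finsupp.linearCombination R id (s x) ∈ orderIdeal R x • (⊤ : Submodule R M) :=
    Submodule.sum_mem _ fun y _ =>
      Submodule.smul_mem_smul ⟨Finsupp.lapply y ∘ₗ s, rfl⟩ Submodule.mem_top
  rwa [hs x] at hsum

lemma koszulDifferential_apply_mem_smul_top [Module.Projective R M] (x : M) {k : ℕ}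
    (ω : M [⋀^Fin (k + 1)]→ₗ[R] R) :
    koszulDifferential R x k ω ∈ orderIdeal R x • (⊤ : Submodule R (M [⋀^Fin k]→ₗ[R] R)) :=
  Submodule.smul_top_le_comap_smul_top _ ω.curryLeft (mem_orderIdeal_smul_top x)

lemma zeroFormEquiv_koszulDifferential (x : M) (η : M [⋀^Fin 1]→ₗ[R] R) :
    zeroFormEquiv R (koszulDifferential R x 0 η) = oneFormEquivDual R η x :=
  congrArg η (funext (Fin.forall_fin_one.2 rfl))

lemma koszulAugmentation_surjective (x : M) : Function.Surjective (koszulAugmentation R x) :=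
  (Submodule.mkQ_surjective _).comp (LinearEquiv.surjective _)

lemma exact_koszulDifferential_koszulAugmentation (x : M) :
    Function.Exact (koszulDifferential R x 0) (koszulAugmentation R x) := by
  intro ω
  calc koszulAugmentation R x ω = 0
      ↔ ∃ φ : Module.Dual R M, φ x = zeroFormEquiv R ω := Submodule.Quotient.mk_eq_zero _
    _ ↔ ∃ η : M [⋀^Fin 1]→ₗ[R] R, oneFormEquivDual R η x = zeroFormEquiv R ω :=
      (oneFormEquivDual R).surjective.exists
    _ ↔ ω ∈ Set.range (koszulDifferential R x 0) := by
      simp only [← zeroFormEquiv_koszulDifferential, EmbeddingLike.apply_eq_iff_eq, Set.mem_range]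

lemma dualToCotangent_surjective (x : M) : Function.Surjective (dualToCotangent R x) :=
  (Ideal.toCotangent_surjective _).comp (LinearMap.surjective_rangeRestrict _)

lemma dualToCotangent_eq_zero_iff (x : M) (φ : Module.Dual R M) :
    dualToCotangent R x φ = 0 ↔
      ∃ ψ ∈ orderIdeal R x • (⊤ : Submodule R (Module.Dual R M)), ψ x = φ x := by
  have hsq : orderIdeal R x ^ 2 =
      (orderIdeal R x • (⊤ : Submodule R (Module.Dual R M))).map (Module.Dual.eval R M x) := by
    rw [Submodule.map_smul'', Submodule.map_top, pow_two]
    rfl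
  calc dualToCotangent R x φ = 0
      ↔ φ x ∈ orderIdeal R x ^ 2 := Ideal.toCotangent_eq_zero _ _
    _ ↔ _ := by
      rw [hsq, Submodule.mem_map]
      rfl

namespace IsKoszulRegular

variable {x : M}

lemma mem_smul_top_of_apply_eq_zero [Module.Projective R M] (hx : IsKoszulRegular R x)
    {φ : Module.Dual R M} (hφ : φ x = 0) :
    φ ∈ orderIdeal R x • (⊤ : Submodule R (Module.Dual R M)) := by
  obtain ⟨η, rfl⟩ := (oneFormEquivDual R).surjective φ
  have hη : koszulDifferential R x 0 η = 0 := by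
    rw [← (zeroFormEquiv R).map_eq_zero_iff, zeroFormEquiv_koszulDifferential, hφ]
  obtain ⟨ω, rfl⟩ := (hx 0 η).1 hη
  exact Submodule.smul_top_le_comap_smul_top _ (oneFormEquivDual R).toLinearMap
    (koszulDifferential_apply_mem_smul_top x ω)

lemma ker_dualToCotangent [Module.Projective R M] (hx : IsKoszulRegular R x) :
    LinearMap.ker (dualToCotangent R x) = orderIdeal R x • ⊤ := by
  ext φ
  rw [LinearMap.mem_ker, dualToCotangent_eq_zero_iff]
  refine ⟨?_, fun hφ => ⟨φ, hφ, rfl⟩⟩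
  rintro ⟨ψ, hψ, hψφ⟩
  have hφψ : φ - ψ ∈ orderIdeal R x • (⊤ : Submodule R (Module.Dual R M)) :=
    hx.mem_smul_top_of_apply_eq_zero (sub_eq_zero.2 hψφ.symm)
  simpa using add_mem hφψ hψ

/-- The basis of `I ⧸ I ^ 2`, for `I = orderIdeal R x`, given by the classes of the coordinates of
`x` in the basis `b`. -/
noncomputable def cotangentBasis {ι : Type*} [Finite ι] (b : Module.Basis ι R M)
    (hx : IsKoszulRegular R x) :
    Module.Basis ι (R ⧸ orderIdeal R x) (orderIdeal R x).Cotangent := by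
  classical
  have := Module.Projective.of_basis b
  let e : (R ⧸ orderIdeal R x) ⊗[R] Module.Dual R M ≃ₗ[R] (orderIdeal R x).Cotangent :=
    TensorProduct.quotTensorEquivQuotSMul _ _ ≪≫ₗ
      Submodule.quotEquivOfEq _ _ hx.ker_dualToCotangent.symm ≪≫ₗ
      (dualToCotangent R x).quotKerEquivOfSurjective (dualToCotangent_surjective x)
  exact (b.dualBasis.baseChange (R ⧸ orderIdeal R x)).map
    (e.extendScalarsOfSurjective Ideal.Quotient.mk_surjective)

end IsKoszulRegular

instance projective_alternatingMap [Module.Free R M] [Module.Finite R M] (k : ℕ) :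
    Module.Projective R (M [⋀^Fin k]→ₗ[R] R) :=
  .of_equiv exteriorPower.alternatingMapLinearEquiv.symm

/-- An alternating form is determined by its values, which are arbitrary, on the increasing
`k`-tuples of vectors of the basis `b`. -/
noncomputable def alternatingFormEquivFun {ι : Type*} [LinearOrder ι] [Finite ι]
    (b : Module.Basis ι R M) (k : ℕ) :
    (M [⋀^Fin k]→ₗ[R] R) ≃ₗ[R] (Set.powersetCard ι k → R) :=
  exteriorPower.alternatingMapLinearEquiv ≪≫ₗ ((b.exteriorPower k).constr R).symm

end Koszul

section KoszulComplex

variable (R : Type u) {M : Type u} [CommRing R] [AddCommGroup M] [Module R M]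

/-- The Koszul complex of `x : M`, on the alternating forms on `M`. -/
noncomputable def koszulComplex (x : M) : ChainComplex (ModuleCat.{u} R) ℕ :=
  ChainComplex.of (fun k => ModuleCat.of R (M [⋀^Fin k]→ₗ[R] R))
    (fun k => ModuleCat.ofHom (koszulDifferential R x k))
    (fun k => by rw [← ModuleCat.ofHom_comp, koszulDifferential_comp_koszulDifferential]; rfl)

variable {R}

lemma koszulComplex_d (x : M) (k : ℕ) :
    (koszulComplex R x).d (k + 1) k = ModuleCat.ofHom (koszulDifferential R x k) :=
  ChainComplex.of_d (fun k => ModuleCat.of R (M [⋀^Fin k]→ₗ[R] R))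
    (fun k => ModuleCat.ofHom (koszulDifferential R x k)) k

lemma koszulComplex_d_apply_mem_smul_top [Module.Projective R M] (x : M) (i j : ℕ)
    (ω : (koszulComplex R x).X i) :
    (koszulComplex R x).d i j ω ∈ orderIdeal R x • (⊤ : Submodule R ((koszulComplex R x).X j)) := by
  by_cases hij : j + 1 = i
  · subst hij
    rw [koszulComplex_d]
    exact koszulDifferential_apply_mem_smul_top x ω
  · rw [(koszulComplex R x).shape i j hij]
    exact zero_mem _

lemma koszulComplex_d_comp_eq_zero [Module.Projective R M] {x : M} {N : ModuleCat.{u} R}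
    (hN : orderIdeal R x ≤ Module.annihilator R N) (i j : ℕ) (f : (koszulComplex R x).X j ⟶ N) :
    (koszulComplex R x).d i j ≫ f = 0 := by
  ext ω
  exact map_eq_zero_of_mem_smul_top hN f.hom (koszulComplex_d_apply_mem_smul_top x i j ω)

open MonoidalCategory in
lemma whiskerLeft_koszulComplex_d_eq_zero [Module.Projective R M] {x : M} {N : ModuleCat.{u} R}
    (hN : orderIdeal R x ≤ Module.annihilator R N) (i j : ℕ) :
    N ◁ (koszulComplex R x).d i j = 0 :=
  ModuleCat.hom_ext <| TensorProduct.ext' fun n ω =>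
    tmul_eq_zero_of_mem_smul_top hN n (koszulComplex_d_apply_mem_smul_top x i j ω)

instance projective_koszulComplex_X [Module.Free R M] [Module.Finite R M] (x : M) (k : ℕ) :
    Projective ((koszulComplex R x).X k) :=
  (IsProjective.iff_projective (M [⋀^Fin k]→ₗ[R] R)).1 inferInstance

/-- The coordinates, in the basis given by `b`, of the free module in degree `k` of the Koszul
complex. -/
noncomputable def koszulComplexXEquivFun {ι : Type*} [LinearOrder ι] [Finite ι]
    (b : Module.Basis ι R M) (x : M) (k : ℕ) :
    (koszulComplex R x).X k ≃ₗ[R] (Set.powersetCard ι k → R) :=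
  alternatingFormEquivFun b k

namespace IsKoszulRegular

variable {x : M}

lemma exactAt_koszulComplex (hx : IsKoszulRegular R x) (k : ℕ) :
    (koszulComplex R x).ExactAt (k + 1) := by
  rw [HomologicalComplex.exactAt_iff' _ (k + 2) (k + 1) k (by simp) (by simp),
    ShortComplex.ShortExact.moduleCat_exact_iff_function_exact]
  change Function.Exact ((koszulComplex R x).d (k + 1 + 1) (k + 1)) ((koszulComplex R x).d _ k)
  rw [koszulComplex_d, koszulComplex_d]
  exact hx k

/-- The Koszul complex of `x` as a projective resolution of `R ⧸ orderIdeal R x`. -/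
noncomputable def koszulResolution [Module.Free R M] [Module.Finite R M]
    (hx : IsKoszulRegular R x) :
    ProjectiveResolution (ModuleCat.of R (R ⧸ orderIdeal R x)) :=
  let ε : (koszulComplex R x).X 0 ⟶ ModuleCat.of R (R ⧸ orderIdeal R x) :=
    ModuleCat.ofHom (koszulAugmentation R x)
  have : Epi ε := (ModuleCat.epi_iff_surjective ε).2 (koszulAugmentation_surjective x)
  have hε : Function.Exact ((koszulComplex R x).d 1 0) ε := by
    rw [koszulComplex_d]
    exact exact_koszulDifferential_koszulAugmentation x
  have w : (koszulComplex R x).d 1 0 ≫ ε = 0 := by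
    ext ω
    exact hε.apply_apply_eq_zero ω
  projectiveResolutionOfExact (koszulComplex R x) ε w
    ((ShortComplex.ShortExact.moduleCat_exact_iff_function_exact _).2 hε) hx.exactAt_koszulComplex

variable {n : ℕ} (b : Module.Basis (Fin n) R M) (hx : IsKoszulRegular R x)
  {N : Type u} [AddCommGroup N] [Module R N]

/-- `Tor` of `R ⧸ orderIdeal R x` with a module killed by `orderIdeal R x`. -/
noncomputable def torIso (hN : orderIdeal R x ≤ Module.annihilator R N) (i : ℕ) :
    ((Tor (ModuleCat R) i).obj (ModuleCat.of R N)).obj (ModuleCat.of R (R ⧸ orderIdeal R x)) ≅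
      ModuleCat.of R (Set.powersetCard (Fin n) i → N) := by
  have := Module.Free.of_basis b
  have := Module.Finite.of_basis b
  exact torIsoTensorObj _ hx.koszulResolution (whiskerLeft_koszulComplex_d_eq_zero hN) i ≪≫
    ((koszulComplexXEquivFun b x i).lTensor N ≪≫ₗ
      TensorProduct.piScalarRight R R N _).toModuleIso

/-- `Ext` of `R ⧸ orderIdeal R x` into a module killed by `orderIdeal R x`. -/
noncomputable def extIso (hN : orderIdeal R x ≤ Module.annihilator R N) (i : ℕ) :
    ((Ext R (ModuleCat R) i).obj (Opposite.op (ModuleCat.of R (R ⧸ orderIdeal R x)))).obj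
        (ModuleCat.of R N) ≅
      ModuleCat.of R (Set.powersetCard (Fin n) i → N) := by
  have := Module.Free.of_basis b
  have := Module.Finite.of_basis b
  exact extIsoHom R hx.koszulResolution _ (koszulComplex_d_comp_eq_zero hN) i ≪≫
    (ModuleCat.homLinearEquiv ≪≫ₗ
      ((Module.Basis.ofEquivFun (koszulComplexXEquivFun b x i)).constr R).symm).toModuleIso

end IsKoszulRegular

theorem tor_ext_of_koszul_resolution_general [Module.Free R M] [Module.Finite R M] {x : M}
    (hx : IsKoszulRegular R x) (i : ℕ) :
    Nonempty
        (((Tor (ModuleCat R) i).obj (ModuleCat.of R (R ⧸ orderIdeal R x))).obj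
            (ModuleCat.of R (R ⧸ orderIdeal R x))
          ≅ (ModuleCat.restrictScalars (algebraMap R (R ⧸ orderIdeal R x))).obj
              (ModuleCat.of (R ⧸ orderIdeal R x)
                (⋀[R ⧸ orderIdeal R x]^i (orderIdeal R x).Cotangent))) ∧
      Nonempty
        (((Ext R (ModuleCat R) i).obj (Opposite.op (ModuleCat.of R (R ⧸ orderIdeal R x)))).obj
            (ModuleCat.of R (R ⧸ orderIdeal R x))
          ≅ (ModuleCat.restrictScalars (algebraMap R (R ⧸ orderIdeal R x))).obj
              (ModuleCat.of (R ⧸ orderIdeal R x)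
                (Module.Dual (R ⧸ orderIdeal R x)
                  (⋀[R ⧸ orderIdeal R x]^i (orderIdeal R x).Cotangent)))) := by
  let b := (Module.Free.chooseBasis R M).reindex (Fintype.equivFin _)
  let B := (hx.cotangentBasis b).exteriorPower i
  have hann : orderIdeal R x ≤ Module.annihilator R (R ⧸ orderIdeal R x) :=
    Ideal.annihilator_quotient.ge
  let restrict := ModuleCat.restrictScalars (algebraMap R (R ⧸ orderIdeal R x))
  exact ⟨⟨hx.torIso b hann i ≪≫ (restrictScalarsOfIso R _ _).symm ≪≫
      restrict.mapIso B.equivFun.symm.toModuleIso⟩,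
    ⟨hx.extIso b hann i ≪≫ (restrictScalarsOfIso R _ _).symm ≪≫
      restrict.mapIso (B.constr (R ⧸ orderIdeal R x)).toModuleIso⟩⟩

end KoszulComplex

section Coordinates

variable {R : Type*} [CommRing R]

lemma orderIdeal_pi {ι : Type*} [Finite ι] (J : ι → R) :
    orderIdeal R J = Ideal.span (Set.range J) := by
  classical
  have := Fintype.ofFinite ι
  apply le_antisymm
  · rintro _ ⟨φ, rfl⟩
    rw [Module.Dual.eval_apply, LinearMap.pi_apply_eq_sum_univ φ J]
    exact Ideal.sum_mem _ fun b _ =>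
      Ideal.mul_mem_right _ _ (Ideal.subset_span (Set.mem_range_self b))
  · rw [Ideal.span_le, Set.range_subset_iff]
    exact fun b => ⟨LinearMap.proj b, rfl⟩

lemma koszulDifferential_apply_single {ℓ k : ℕ} (J : Fin ℓ → R)
    (ω : (Fin ℓ → R) [⋀^Fin (k + 1)]→ₗ[R] R) (v : Fin k → Fin ℓ) :
    koszulDifferential R J k ω (fun i => Pi.single (v i) 1) =
      ∑ b, J b * ω (fun i => Pi.single ((Fin.cons b v : Fin (k + 1) → Fin ℓ) i) 1) := by
  have hcons (b : Fin ℓ) :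
      ω.toMultilinearMap.curryLeft (Pi.single b 1) (fun i => Pi.single (v i) 1) =
        ω (fun i => Pi.single ((Fin.cons b v : Fin (k + 1) → Fin ℓ) i) 1) :=
    congrArg ω (funext (Fin.cases rfl fun _ => rfl))
  calc koszulDifferential R J k ω (fun i => Pi.single (v i) 1)
      = ω.toMultilinearMap.curryLeft (∑ b, J b • Pi.single b 1) (fun i => Pi.single (v i) 1) := by
        rw [← pi_eq_sum_univ']
        rfl
    _ = _ := by
        simp only [map_sum, map_smul, sum_apply, smul_apply, hcons, smul_eq_mul]

variable {A : Type} [CommRing A] {ℓ k : ℕ}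

lemma isAltTensor_apply_single (ω : (Fin ℓ → A) [⋀^Fin k]→ₗ[A] A) :
    IsAltTensor ℓ k fun v => ω fun i => Pi.single (v i) 1 :=
  ⟨fun _ hv => ω.map_eq_zero_of_not_injective _ fun h =>
      hv (Function.Injective.of_comp (f := fun j : Fin ℓ => (Pi.single j 1 : Fin ℓ → A)) h),
    fun v σ => (ω.map_perm (fun i => Pi.single (v i) 1) σ).trans (Units.smul_def _ _)⟩

namespace IsAltTensor

variable {F : (Fin k → Fin ℓ) → A}

lemma apply_comp_swap (hF : IsAltTensor ℓ k F) (v : Fin k → Fin ℓ) {i j : Fin k} (hij : i ≠ j) :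
    F (v ∘ Equiv.swap i j) = -F v := by
  simp [hF.2, Equiv.Perm.sign_swap hij]

lemma sum_mul_prod_eq_zero (hF : IsAltTensor ℓ k F) {m : Fin k → Fin ℓ → A} {i j : Fin k}
    (hm : m i = m j) (hij : i ≠ j) : ∑ v, F v * ∏ l, m l (v l) = 0 := by
  refine Finset.sum_involution (fun v _ => v ∘ Equiv.swap i j) (fun v _ => ?_)
    (fun v _ hv hfix => ?_) (fun _ _ => Finset.mem_univ _) (fun v _ => ?_)
  · have hprod : ∏ l, m l (v (Equiv.swap i j l)) = ∏ l, m l (v l) :=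
      Fintype.prod_equiv (Equiv.swap i j) _ _ fun l => by rw [Equiv.apply_swap_eq_self hm]
    simp [hF.apply_comp_swap v hij, hprod]
  · refine left_ne_zero_of_mul hv (hF.1 v fun hinj => hij (hinj ?_))
    simpa using congrFun hfix j
  · funext l
    simp

/-- The alternating form on `A ^ ℓ` whose values on unit vectors are the entries of `F`. -/
noncomputable def toAlternatingMap (hF : IsAltTensor ℓ k F) : (Fin ℓ → A) [⋀^Fin k]→ₗ[A] A where
  __ := ∑ v, F v •
    (MultilinearMap.mkPiAlgebra A (Fin k) A).compLinearMap fun i => LinearMap.proj (v i)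
  map_eq_zero_of_eq' m i j hm hij := by
    simpa [sum_apply] using hF.sum_mul_prod_eq_zero hm hij

lemma toAlternatingMap_apply (hF : IsAltTensor ℓ k F) (m : Fin k → Fin ℓ → A) :
    hF.toAlternatingMap m = ∑ v, F v * ∏ i, m i (v i) := by
  simp [toAlternatingMap]

lemma toAlternatingMap_apply_single (hF : IsAltTensor ℓ k F) (v : Fin k → Fin ℓ) :
    hF.toAlternatingMap (fun i => Pi.single (v i) 1) = F v := by
  rw [toAlternatingMap_apply, Finset.sum_eq_single v]
  · simp
  · intro w _ hw
    obtain ⟨i, hi⟩ := Function.ne_iff.1 hw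
    rw [Finset.prod_eq_zero (Finset.mem_univ i) (Pi.single_eq_of_ne hi 1), mul_zero]
  · simp

end IsAltTensor

lemma isKoszulRegular_of_isAltTensor {J : Fin ℓ → A}
    (hacyclic : ∀ (k : ℕ) (F : (Fin (k + 1) → Fin ℓ) → A), IsAltTensor ℓ (k + 1) F →
      (∀ v : Fin k → Fin ℓ, ∑ b, J b * F (Fin.cons b v) = 0) →
      ∃ G : (Fin (k + 2) → Fin ℓ) → A, IsAltTensor ℓ (k + 2) G ∧
        ∀ v : Fin (k + 1) → Fin ℓ, F v = ∑ b, J b * G (Fin.cons b v)) :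
    IsKoszulRegular A J := by
  refine fun k => LinearMap.exact_of_comp_of_mem_range
    (koszulDifferential_comp_koszulDifferential J k) fun ω hω => ?_
  obtain ⟨G, hG, hωG⟩ := hacyclic k _ (isAltTensor_apply_single ω) fun v => by
    rw [← koszulDifferential_apply_single, hω, AlternatingMap.zero_apply]
  refine ⟨hG.toAlternatingMap, (Pi.basisFun A (Fin ℓ)).ext_alternating fun v _ => ?_⟩
  simp only [Pi.basisFun_apply, koszulDifferential_apply_single, hG.toAlternatingMap_apply_single,
    hωG]

end Coordinates

/-- **Tor and Ext of `A/I` for a Koszul-regular sequence.**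
Let `A` be a commutative ring and `J = (J₁, …, J_ℓ)` a sequence generating the ideal
`I ⊆ A` such that the Koszul complex `K(A, J)` is a resolution of `A/I` (acyclicity in
positive degrees is expressed below; `H₀ = A/I` holds automatically).  Then for all
`i ≥ 0` there are isomorphisms of `A/I`-modules (equivalently, of `A`-modules on which
`I` acts trivially)
`Tor_i^A(A/I, A/I) ≅ Λ^i_{A/I}(I/I²)` and
`Ext^i_A(A/I, A/I) ≅ Hom_{A/I}(Λ^i_{A/I}(I/I²), A/I)`,
where `I/I²` is the cotangent module `I.Cotangent`. -/
theorem tor_ext_of_koszul_resolution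
    (A : Type) [CommRing A] (ℓ : ℕ) (J : Fin ℓ → A)
    (I : Ideal A) (hI : I = Ideal.span (Set.range J))
    -- acyclicity of the Koszul complex in positive degrees
    (hacyclic : ∀ (k : ℕ) (F : (Fin (k + 1) → Fin ℓ) → A), IsAltTensor ℓ (k + 1) F →
      (∀ v : Fin k → Fin ℓ, ∑ b, J b * F (Fin.cons b v) = 0) →
      ∃ G : (Fin (k + 2) → Fin ℓ) → A, IsAltTensor ℓ (k + 2) G ∧
        ∀ v : Fin (k + 1) → Fin ℓ, F v = ∑ b, J b * G (Fin.cons b v)) :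
    ∀ i : ℕ,
      Nonempty
        (((Tor (ModuleCat A) i).obj (ModuleCat.of A (A ⧸ I))).obj
            (ModuleCat.of A (A ⧸ I))
          ≅ (ModuleCat.restrictScalars (algebraMap A (A ⧸ I))).obj
              (ModuleCat.of (A ⧸ I) (⋀[A ⧸ I]^i I.Cotangent)))
      ∧
      Nonempty
        (((Ext A (ModuleCat A) i).obj (Opposite.op (ModuleCat.of A (A ⧸ I)))).obj
            (ModuleCat.of A (A ⧸ I))
          ≅ (ModuleCat.restrictScalars (algebraMap A (A ⧸ I))).obj
              (ModuleCat.of (A ⧸ I)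
                (Module.Dual (A ⧸ I) (⋀[A ⧸ I]^i I.Cotangent)))) := by
  obtain rfl : I = orderIdeal A J := hI.trans (orderIdeal_pi J).symm
  exact tor_ext_of_koszul_resolution_general (isKoszulRegular_of_isAltTensor hacyclic)
end

section
/- Square-zero of the classical BRST charge for an equivariant moment map: Let g be a finite-dimensional Lie algebra with structure constants f_{ab}^c and J : g → C^∞(M) a linear map with {J_a, J_b} = Σ_c f_{ab}^c J_c (Poisson Lie algebra morphism). On the graded Poisson algebra A ⊗ Λ(g ⊕ g*) with the even super-Poisson bracket determined by {ξ_a, ξ^b} = 2δ_a^b, {ξ_a,ξ_b} = {ξ^a,ξ^b} = 0 and the Poisson bracket on A = C^∞(M), the element θ = -¼ Σ_{a,b,c} f_{ab}^c ξ^a ξ^b ξ_c + Σ_a J_a ξ^a satisfies {θ,θ} = 0. Consequently D := {θ,·} is a square-zero derivation of degree +1. -/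
/-!
Put `ω^c = ∑ f_{ab}^c ξ^a ξ^b` (which is `-2 dξ^c` for the Chevalley–Eilenberg differential `d`)
and `Γ_a^c = ∑ f_{ab}^c ξ^b`, so that `θ = -¼ ∑ ω^c ξ_c + ∑ J_a ξ^a`. The derivation
`D = {θ, ·}` satisfies `D ξ^c = -½ ω^c`, `D ξ_c = -∑ Γ_c^e ξ_e + 2 J_c` and
`D J_a = -∑ J_c Γ_a^c`.
The Jacobi identity of the structure constants gives `∑ ω^a Γ_a^c = 0`, that is
`d² ξ^c = 0`. This kills `D ω^c` and, in `D θ`, the terms containing antighosts. What is left is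
`-½ ∑ J_c ω^c + ∑ J_c ω^c - ½ ∑ J_c ω^c = 0`, from `D ξ_c`, `D J_a` and `D ξ^a` respectively.
-/

open scoped BigOperators

/-- The sign `(-1)^x` (for an integer exponent `x`; only the parity of `x` matters). -/
def gsgn (K : Type*) [Field K] (x : ℤ) : K := (-1 : K) ^ x.natAbs

section Sign

variable {K : Type*} [Field K] {n : ℤ}

theorem gsgn_of_even (hn : Even n) : gsgn K n = 1 :=
  (Int.natAbs_even.mpr hn).neg_one_pow

theorem gsgn_of_odd (hn : Odd n) : gsgn K n = -1 :=
  (Int.natAbs_odd.mpr hn).neg_one_pow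

end Sign

theorem inv_four_mul_two {K : Type*} [Field K] [NeZero (2 : K)] : (4 : K)⁻¹ * 2 = 2⁻¹ := by
  rw [show (4 : K) = 2 * 2 by norm_num, mul_inv, inv_mul_cancel_right₀ two_ne_zero]

theorem mul_mul_cyclic_of_anticomm {R : Type*} [Semigroup R] [HasDistribNeg R] {x y z : R}
    (hxy : y * x = -(x * y)) (hxz : z * x = -(x * z)) : y * z * x = x * y * z := by
  rw [mul_assoc, hxz, mul_neg, ← mul_assoc, hxy, neg_mul, neg_neg]

theorem sum_smul_eq_zero_of_cyclic {K M ι : Type*} [Field K] [NeZero (3 : K)] [AddCommGroup M]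
    [Module K M] [Fintype ι] {c : ι → ι → ι → K} {X : ι → ι → ι → M}
    (hc : ∀ p q r, c p q r + c q r p + c r p q = 0) (hX : ∀ p q r, X q r p = X p q r) :
    ∑ p, ∑ q, ∑ r, c p q r • X p q r = 0 := by
  have rotate (b : ι → ι → ι → K) :
      ∑ p, ∑ q, ∑ r, b q r p • X p q r = ∑ p, ∑ q, ∑ r, b p q r • X p q r := by
    calc ∑ p, ∑ q, ∑ r, b q r p • X p q r
        = ∑ p, ∑ q, ∑ r, b q r p • X q r p := by simp only [hX]
      _ = ∑ p, ∑ q, ∑ r, b p q r • X p q r := Finset.sum_comm_cycle.symm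
  have total : ∑ p, ∑ q, ∑ r, (c p q r + c q r p + c r p q) • X p q r =
      (3 : K) • ∑ p, ∑ q, ∑ r, c p q r • X p q r := by
    simp only [add_smul, Finset.sum_add_distrib]
    rw [rotate fun p q r ↦ c q r p, rotate c]
    module
  simp only [hc, zero_smul, Finset.sum_const_zero] at total
  exact (smul_eq_zero.mp total.symm).resolve_left three_ne_zero

/-- The structure constants `f a b c = f_{ab}^c` of a finite-dimensional Lie algebra in a basis,
characterised by antisymmetry and the Jacobi identity. -/
structure IsLieStructureConstants {K ι : Type*} [Field K] [Fintype ι] (f : ι → ι → ι → K) :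
    Prop where
  skew : ∀ a b c, f a b c = -f b a c
  jacobi : ∀ a b c d, ∑ e, (f a b e * f e c d + f b c e * f e a d + f c a e * f e b d) = 0

section Forms

variable {K W ι : Type*} [Field K] [Ring W] [Algebra K W] [Fintype ι]
  {f : ι → ι → ι → K} {ξ : ι → W}

/-- The matrix of one-forms `Γ_a^c = ∑ f_{ab}^c ξ^b`, representing the adjoint action. -/
def adjointForm (f : ι → ι → ι → K) (ξ : ι → W) (a c : ι) : W :=
  ∑ b, f a b c • ξ b

/-- The two-form `ω^c = ∑ f_{ab}^c ξ^a ξ^b`, normalised without the factor `-½` that would make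
it the Chevalley–Eilenberg differential of `ξ^c`. -/
def structureForm (f : ι → ι → ι → K) (ξ : ι → W) (c : ι) : W :=
  ∑ a, ∑ b, f a b c • (ξ a * ξ b)

theorem sum_adjointForm_mul (hξ : ∀ a b, ξ a * ξ b = -(ξ b * ξ a)) (c : ι) :
    ∑ a, adjointForm f ξ a c * ξ a = -structureForm f ξ c := by
  simp only [adjointForm, structureForm, Finset.sum_mul, smul_mul_assoc,
    ← Finset.sum_neg_distrib, ← smul_neg, ← hξ]

theorem sum_structureForm_mul_adjointForm [NeZero (3 : K)] (hf : IsLieStructureConstants f)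
    (hξ : ∀ a b, ξ a * ξ b = -(ξ b * ξ a)) (c : ι) :
    ∑ a, structureForm f ξ a * adjointForm f ξ a c = 0 := by
  calc ∑ a, structureForm f ξ a * adjointForm f ξ a c
      = ∑ e, ∑ p, ∑ q, ∑ r, (f p q e * f e r c) • (ξ p * ξ q * ξ r) := by
        simp only [structureForm, Finset.sum_mul]
        simp only [adjointForm, Finset.mul_sum, smul_mul_smul_comm]
    _ = ∑ p, ∑ q, ∑ r, (∑ e, f p q e * f e r c) • (ξ p * ξ q * ξ r) := by
        simp only [Finset.sum_smul]
        rw [Finset.sum_comm]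
        exact Finset.sum_congr rfl fun p _ ↦ Finset.sum_comm_cycle.symm
    _ = 0 := sum_smul_eq_zero_of_cyclic (c := fun p q r ↦ ∑ e, f p q e * f e r c)
        (X := fun p q r ↦ ξ p * ξ q * ξ r)
        (fun p q r ↦ by simpa only [Finset.sum_add_distrib] using hf.jacobi p q r c)
        fun p q r ↦ mul_mul_cyclic_of_anticomm (hξ q p) (hξ r p)

end Forms

/-- Graded commutativity `x y = (-1)^{ij} y x` for `x`, `y` of degrees `i`, `j`. The submodules
`𝒲 i` are not required to decompose the algebra. -/
def IsSupercommutative {K W : Type*} [Field K] [Ring W] [Algebra K W] (𝒲 : ℤ → Submodule K W) :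
    Prop :=
  ∀ i j : ℤ, ∀ x ∈ 𝒲 i, ∀ y ∈ 𝒲 j, x * y = gsgn K (i * j) • (y * x)

/-- A bracket with the signs of an even super-Poisson bracket, graded-antisymmetric and acting by
graded derivations. Neither the Jacobi identity nor compatibility with degrees is included. -/
structure IsSuperBiderivation {K W : Type*} [Field K] [Ring W] [Algebra K W]
    (𝒲 : ℤ → Submodule K W) (B : W →ₗ[K] W →ₗ[K] W) : Prop where
  skew : ∀ i j : ℤ, ∀ x ∈ 𝒲 i, ∀ y ∈ 𝒲 j, B x y = -(gsgn K (i * j) • B y x)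
  leibniz : ∀ i j : ℤ, ∀ x ∈ 𝒲 i, ∀ y ∈ 𝒲 j, ∀ z : W,
    B x (y * z) = B x y * z + gsgn K (i * j) • (y * B x z)

section Graded

variable {K W : Type*} [Field K] [Ring W] [Algebra K W] {𝒲 : ℤ → Submodule K W}
  {B : W →ₗ[K] W →ₗ[K] W} {i j : ℤ} {x y : W}

namespace IsSupercommutative

theorem mul_comm_of_even (h𝒲 : IsSupercommutative 𝒲) (hx : x ∈ 𝒲 i) (hy : y ∈ 𝒲 j)
    (hij : Even (i * j)) : x * y = y * x := by
  rw [h𝒲 i j x hx y hy, gsgn_of_even hij, one_smul]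

theorem mul_anticomm_of_odd (h𝒲 : IsSupercommutative 𝒲) (hx : x ∈ 𝒲 i) (hy : y ∈ 𝒲 j)
    (hij : Odd (i * j)) : x * y = -(y * x) := by
  rw [h𝒲 i j x hx y hy, gsgn_of_odd hij, neg_one_smul]

end IsSupercommutative

namespace IsSuperBiderivation

theorem anticomm_of_even (hB : IsSuperBiderivation 𝒲 B) (hx : x ∈ 𝒲 i) (hy : y ∈ 𝒲 j)
    (hij : Even (i * j)) : B x y = -B y x := by
  rw [hB.skew i j x hx y hy, gsgn_of_even hij, one_smul]

theorem comm_of_odd (hB : IsSuperBiderivation 𝒲 B) (hx : x ∈ 𝒲 i) (hy : y ∈ 𝒲 j)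
    (hij : Odd (i * j)) : B x y = B y x := by
  rw [hB.skew i j x hx y hy, gsgn_of_odd hij, neg_one_smul, neg_neg]

theorem leibniz_of_even (hB : IsSuperBiderivation 𝒲 B) (hx : x ∈ 𝒲 i) (hy : y ∈ 𝒲 j)
    (hij : Even (i * j)) (z : W) : B x (y * z) = B x y * z + y * B x z := by
  rw [hB.leibniz i j x hx y hy, gsgn_of_even hij, one_smul]

theorem leibniz_of_odd (hB : IsSuperBiderivation 𝒲 B) (hx : x ∈ 𝒲 i) (hy : y ∈ 𝒲 j)
    (hij : Odd (i * j)) (z : W) : B x (y * z) = B x y * z - y * B x z := by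
  rw [hB.leibniz i j x hx y hy, gsgn_of_odd hij, neg_one_smul, sub_eq_add_neg]

end IsSuperBiderivation

end Graded

/-- Ghosts `ξ a = ξ^a` of degree `1` and antighosts `η a = ξ_a` of degree `-1`, with the bracket
relations of `g* ⊕ g`. -/
structure IsGhostSystem {K W ι : Type*} [Field K] [Ring W] [Algebra K W] [DecidableEq ι]
    (𝒲 : ℤ → Submodule K W) (B : W →ₗ[K] W →ₗ[K] W) (ξ η : ι → W) : Prop where
  ghost_mem : ∀ a, ξ a ∈ 𝒲 1
  antighost_mem : ∀ a, η a ∈ 𝒲 (-1)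
  antighost_ghost : ∀ a b, B (η a) (ξ b) = if a = b then (2 : K) • 1 else 0
  ghost_ghost : ∀ a b, B (ξ a) (ξ b) = 0
  antighost_antighost : ∀ a b, B (η a) (η b) = 0

namespace IsGhostSystem

variable {K W ι : Type*} [Field K] [Ring W] [Algebra K W] [DecidableEq ι]
  {𝒲 : ℤ → Submodule K W} {B : W →ₗ[K] W →ₗ[K] W} {ξ η : ι → W}

theorem ghost_anticomm (hg : IsGhostSystem 𝒲 B ξ η) (h𝒲 : IsSupercommutative 𝒲) (a b : ι) :
    ξ a * ξ b = -(ξ b * ξ a) :=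
  h𝒲.mul_anticomm_of_odd (hg.ghost_mem a) (hg.ghost_mem b) (by decide)

theorem ghost_antighost (hg : IsGhostSystem 𝒲 B ξ η)
    (hB : IsSuperBiderivation 𝒲 B) (a b : ι) :
    B (ξ a) (η b) = if b = a then (2 : K) • 1 else 0 := by
  rw [hB.comm_of_odd (hg.ghost_mem a) (hg.antighost_mem b) (by decide), hg.antighost_ghost]

end IsGhostSystem

/-- The components `μ a = J_a` of an equivariant moment map, as elements of degree `0` commuting
with the ghosts and antighosts. -/
structure IsEquivariantMoment {K W ι : Type*} [Field K] [Ring W] [Algebra K W] [Fintype ι]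
    (𝒲 : ℤ → Submodule K W) (B : W →ₗ[K] W →ₗ[K] W) (f : ι → ι → ι → K) (ξ η μ : ι → W) :
    Prop where
  mem : ∀ a, μ a ∈ 𝒲 0
  bracket_ghost : ∀ a b, B (μ a) (ξ b) = 0
  bracket_antighost : ∀ a b, B (μ a) (η b) = 0
  equivariant : ∀ a b, B (μ a) (μ b) = ∑ c, f a b c • μ c

section Charge

variable {K W ι : Type*} [Field K] [Ring W] [Algebra K W] [Fintype ι]

/-- The classical BRST charge `θ = -¼ ∑ f_{ab}^c ξ^a ξ^b ξ_c + ∑ J_a ξ^a`. -/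
def brstCharge (f : ι → ι → ι → K) (ξ η μ : ι → W) : W :=
  -((4 : K)⁻¹ • ∑ a, ∑ b, ∑ c, f a b c • (ξ a * (ξ b * η c))) + ∑ a, μ a * ξ a

theorem brstCharge_eq (f : ι → ι → ι → K) (ξ η μ : ι → W) :
    brstCharge f ξ η μ =
      -((4 : K)⁻¹ • ∑ c, structureForm f ξ c * η c) + ∑ a, μ a * ξ a := by
  have cubic : ∑ a, ∑ b, ∑ c, f a b c • (ξ a * (ξ b * η c)) = ∑ c, structureForm f ξ c * η c := by
    simp only [structureForm, Finset.sum_mul, smul_mul_assoc, mul_assoc]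
    exact Finset.sum_comm_cycle
  rw [brstCharge, cubic]

variable {𝒲 : ℤ → Submodule K W} {B : W →ₗ[K] W →ₗ[K] W} {f : ι → ι → ι → K} {ξ η μ : ι → W}

theorem structureForm_mem [SetLike.GradedMul 𝒲] (hξ : ∀ a, ξ a ∈ 𝒲 1) (c : ι) :
    structureForm f ξ c ∈ 𝒲 2 :=
  sum_mem fun a _ ↦ sum_mem fun b _ ↦ Submodule.smul_mem _ _
    (SetLike.mul_mem_graded (hξ a) (hξ b))

theorem brstCharge_mem [SetLike.GradedMul 𝒲] (hξ : ∀ a, ξ a ∈ 𝒲 1) (hη : ∀ a, η a ∈ 𝒲 (-1))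
    (hμ : ∀ a, μ a ∈ 𝒲 0) : brstCharge f ξ η μ ∈ 𝒲 1 := by
  rw [brstCharge_eq]
  refine add_mem (neg_mem (Submodule.smul_mem _ _ (sum_mem fun c _ ↦ ?_))) (sum_mem fun a _ ↦ ?_)
  · exact SetLike.mul_mem_graded (structureForm_mem hξ c) (hη c)
  · exact SetLike.mul_mem_graded (hμ a) (hξ a)

theorem bracket_structureForm_eq_zero (hB : IsSuperBiderivation 𝒲 B) (hξ : ∀ a, ξ a ∈ 𝒲 1)
    {i : ℤ} {x : W} (hx : x ∈ 𝒲 i) (hxξ : ∀ a, B x (ξ a) = 0) (c : ι) :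
    B x (structureForm f ξ c) = 0 := by
  simp [structureForm, hB.leibniz i 1 x hx _ (hξ _), hxξ]

variable [DecidableEq ι]

theorem IsGhostSystem.antighost_structureForm (hg : IsGhostSystem 𝒲 B ξ η)
    (hB : IsSuperBiderivation 𝒲 B) (hf : IsLieStructureConstants f) (c e : ι) :
    B (η c) (structureForm f ξ e) = (4 : K) • adjointForm f ξ c e := by
  have monomial (a b : ι) : B (η c) (ξ a * ξ b) =
      (if c = a then (2 : K) • ξ b else 0) - if c = b then (2 : K) • ξ a else 0 := by
    rw [hB.leibniz_of_odd (hg.antighost_mem c) (hg.ghost_mem a) (by decide),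
      hg.antighost_ghost, hg.antighost_ghost]
    simp only [ite_mul, mul_ite, smul_mul_assoc, mul_smul_comm, one_mul, mul_one, zero_mul,
      mul_zero]
  simp only [structureForm, map_sum, map_smul, monomial, smul_sub, smul_ite, smul_zero,
    Finset.sum_sub_distrib, Finset.sum_ite_irrel, Finset.sum_const_zero, Finset.sum_ite_eq,
    Finset.mem_univ, if_true]
  simp only [hf.skew _ c e, neg_smul, Finset.sum_neg_distrib, adjointForm, Finset.smul_sum,
    sub_neg_eq_add, ← Finset.sum_add_distrib]
  refine Finset.sum_congr rfl fun b _ ↦ ?_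
  module

section Differential

variable [SetLike.GradedMul 𝒲]

theorem bracket_brstCharge_ghost [NeZero (2 : K)] (hB : IsSuperBiderivation 𝒲 B)
    (hg : IsGhostSystem 𝒲 B ξ η) (hμ : IsEquivariantMoment 𝒲 B f ξ η μ) (c : ι) :
    B (brstCharge f ξ η μ) (ξ c) = -((2 : K)⁻¹ • structureForm f ξ c) := by
  have cubic (e : ι) : B (ξ c) (structureForm f ξ e * η e) =
      if e = c then (2 : K) • structureForm f ξ e else 0 := by
    rw [hB.leibniz_of_even (hg.ghost_mem c) (structureForm_mem hg.ghost_mem e) (by decide),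
      bracket_structureForm_eq_zero hB hg.ghost_mem (hg.ghost_mem c) (hg.ghost_ghost c),
      hg.ghost_antighost hB]
    simp
  have linear (a : ι) : B (ξ c) (μ a * ξ a) = 0 := by
    rw [hB.leibniz_of_even (hg.ghost_mem c) (hμ.mem a) (by decide), hg.ghost_ghost,
      hB.anticomm_of_even (hg.ghost_mem c) (hμ.mem a) (by decide), hμ.bracket_ghost]
    simp
  rw [hB.comm_of_odd (brstCharge_mem hg.ghost_mem hg.antighost_mem hμ.mem) (hg.ghost_mem c)
    (by decide), brstCharge_eq]
  simp only [map_add, map_neg, map_smul, map_sum, cubic, linear, Finset.sum_ite_eq',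
    Finset.mem_univ, if_true, Finset.sum_const_zero, add_zero, smul_smul, inv_four_mul_two]

theorem bracket_brstCharge_antighost [NeZero (2 : K)] (hB : IsSuperBiderivation 𝒲 B)
    (hf : IsLieStructureConstants f) (hg : IsGhostSystem 𝒲 B ξ η)
    (hμ : IsEquivariantMoment 𝒲 B f ξ η μ) (c : ι) :
    B (brstCharge f ξ η μ) (η c) = -∑ e, adjointForm f ξ c e * η e + (2 : K) • μ c := by
  have cubic (e : ι) :
      B (η c) (structureForm f ξ e * η e) = (4 : K) • (adjointForm f ξ c e * η e) := by
    rw [hB.leibniz_of_even (hg.antighost_mem c) (structureForm_mem hg.ghost_mem e) (by decide),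
      hg.antighost_structureForm hB hf, hg.antighost_antighost, mul_zero, add_zero,
      smul_mul_assoc]
  have linear (a : ι) : B (η c) (μ a * ξ a) = if c = a then (2 : K) • μ a else 0 := by
    rw [hB.leibniz_of_even (hg.antighost_mem c) (hμ.mem a) (by decide), hg.antighost_ghost,
      hB.anticomm_of_even (hg.antighost_mem c) (hμ.mem a) (by decide), hμ.bracket_antighost]
    simp
  have four_ne : (4 : K) ≠ 0 := by
    rw [show (4 : K) = 2 * 2 by norm_num]
    exact mul_ne_zero two_ne_zero two_ne_zero
  rw [hB.comm_of_odd (brstCharge_mem hg.ghost_mem hg.antighost_mem hμ.mem) (hg.antighost_mem c)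
    (by decide), brstCharge_eq]
  simp only [map_add, map_neg, map_smul, map_sum, cubic, linear, Finset.sum_ite_eq,
    Finset.mem_univ, if_true, ← Finset.smul_sum, inv_smul_smul₀ four_ne]

theorem bracket_brstCharge_moment (hB : IsSuperBiderivation 𝒲 B) (hg : IsGhostSystem 𝒲 B ξ η)
    (hμ : IsEquivariantMoment 𝒲 B f ξ η μ) (a : ι) :
    B (brstCharge f ξ η μ) (μ a) = -∑ c, μ c * adjointForm f ξ a c := by
  have cubic (e : ι) : B (μ a) (structureForm f ξ e * η e) = 0 := by
    rw [hB.leibniz_of_even (hμ.mem a) (structureForm_mem hg.ghost_mem e) (by decide),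
      bracket_structureForm_eq_zero hB hg.ghost_mem (hμ.mem a) (hμ.bracket_ghost a),
      hμ.bracket_antighost, zero_mul, mul_zero, add_zero]
  have linear (b : ι) : B (μ a) (μ b * ξ b) = ∑ c, f a b c • (μ c * ξ b) := by
    rw [hB.leibniz_of_even (hμ.mem a) (hμ.mem b) (by decide), hμ.equivariant,
      hμ.bracket_ghost, mul_zero, add_zero, Finset.sum_mul]
    simp only [smul_mul_assoc]
  rw [hB.anticomm_of_even (brstCharge_mem hg.ghost_mem hg.antighost_mem hμ.mem) (hμ.mem a)
    (by decide), brstCharge_eq]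
  simp only [map_add, map_neg, map_smul, map_sum, cubic, linear, Finset.sum_const_zero,
    smul_zero, neg_zero, zero_add, adjointForm, Finset.mul_sum, mul_smul_comm]
  rw [Finset.sum_comm]

theorem bracket_brstCharge_structureForm [NeZero (2 : K)] [NeZero (3 : K)]
    (h𝒲 : IsSupercommutative 𝒲) (hB : IsSuperBiderivation 𝒲 B) (hf : IsLieStructureConstants f)
    (hg : IsGhostSystem 𝒲 B ξ η) (hμ : IsEquivariantMoment 𝒲 B f ξ η μ) (c : ι) :
    B (brstCharge f ξ η μ) (structureForm f ξ c) = 0 := by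
  have monomial (a b : ι) : B (brstCharge f ξ η μ) (ξ a * ξ b) =
      (2 : K)⁻¹ • (structureForm f ξ b * ξ a - structureForm f ξ a * ξ b) := by
    rw [hB.leibniz_of_odd (brstCharge_mem hg.ghost_mem hg.antighost_mem hμ.mem) (hg.ghost_mem a)
      (by decide), bracket_brstCharge_ghost hB hg hμ, bracket_brstCharge_ghost hB hg hμ, mul_neg,
      mul_smul_comm,
      h𝒲.mul_comm_of_even (hg.ghost_mem a) (structureForm_mem hg.ghost_mem b) (by decide),
      neg_mul, smul_mul_assoc]
    module
  have jacobi : ∑ a, ∑ b, f a b c • (structureForm f ξ a * ξ b) = 0 := by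
    simpa only [adjointForm, Finset.mul_sum, mul_smul_comm] using
      sum_structureForm_mul_adjointForm hf (hg.ghost_anticomm h𝒲) c
  have jacobi_swap : ∑ a, ∑ b, f a b c • (structureForm f ξ b * ξ a) = 0 := by
    rw [Finset.sum_comm, ← neg_eq_zero, ← jacobi]
    simp only [← Finset.sum_neg_distrib, ← neg_smul, ← hf.skew]
  rw [structureForm]
  simp only [map_sum, map_smul, monomial, smul_comm (f _ _ _) (2 : K)⁻¹, smul_sub,
    ← Finset.smul_sum, Finset.sum_sub_distrib, jacobi, jacobi_swap, sub_self, smul_zero]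

theorem bracket_brstCharge_cubic [NeZero (2 : K)] [NeZero (3 : K)]
    (h𝒲 : IsSupercommutative 𝒲) (hB : IsSuperBiderivation 𝒲 B) (hf : IsLieStructureConstants f)
    (hg : IsGhostSystem 𝒲 B ξ η) (hμ : IsEquivariantMoment 𝒲 B f ξ η μ) :
    B (brstCharge f ξ η μ) (∑ c, structureForm f ξ c * η c) =
      (2 : K) • ∑ c, μ c * structureForm f ξ c := by
  have summand (c : ι) : B (brstCharge f ξ η μ) (structureForm f ξ c * η c) =
      -∑ e, structureForm f ξ c * adjointForm f ξ c e * η e +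
        (2 : K) • (μ c * structureForm f ξ c) := by
    rw [hB.leibniz_of_even (brstCharge_mem hg.ghost_mem hg.antighost_mem hμ.mem)
        (structureForm_mem hg.ghost_mem c) (by decide),
      bracket_brstCharge_structureForm h𝒲 hB hf hg hμ,
      bracket_brstCharge_antighost hB hf hg hμ, zero_mul, zero_add, mul_add, mul_neg,
      Finset.mul_sum, mul_smul_comm,
      h𝒲.mul_comm_of_even (hμ.mem c) (structureForm_mem hg.ghost_mem c) (by decide)]
    simp only [mul_assoc]
  have antighost_part :
      ∑ c, ∑ e, structureForm f ξ c * adjointForm f ξ c e * η e = 0 := by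
    rw [Finset.sum_comm]
    simp only [← Finset.sum_mul, sum_structureForm_mul_adjointForm hf (hg.ghost_anticomm h𝒲),
      zero_mul, Finset.sum_const_zero]
  simp only [map_sum, summand, Finset.sum_add_distrib, Finset.sum_neg_distrib, antighost_part,
    neg_zero, zero_add, ← Finset.smul_sum]

theorem bracket_brstCharge_linear [NeZero (2 : K)] (h𝒲 : IsSupercommutative 𝒲)
    (hB : IsSuperBiderivation 𝒲 B) (hg : IsGhostSystem 𝒲 B ξ η)
    (hμ : IsEquivariantMoment 𝒲 B f ξ η μ) :
    B (brstCharge f ξ η μ) (∑ a, μ a * ξ a) = (2 : K)⁻¹ • ∑ c, μ c * structureForm f ξ c := by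
  have summand (a : ι) : B (brstCharge f ξ η μ) (μ a * ξ a) =
      -∑ c, μ c * (adjointForm f ξ a c * ξ a) - (2 : K)⁻¹ • (μ a * structureForm f ξ a) := by
    rw [hB.leibniz_of_even (brstCharge_mem hg.ghost_mem hg.antighost_mem hμ.mem) (hμ.mem a)
      (by decide), bracket_brstCharge_moment hB hg hμ, bracket_brstCharge_ghost hB hg hμ,
      neg_mul, Finset.sum_mul, mul_neg, mul_smul_comm, sub_eq_add_neg]
    simp only [mul_assoc]
  have moment_part : ∑ a, ∑ c, μ c * (adjointForm f ξ a c * ξ a) =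
      -∑ c, μ c * structureForm f ξ c := by
    rw [Finset.sum_comm]
    simp only [← Finset.mul_sum, sum_adjointForm_mul (hg.ghost_anticomm h𝒲), mul_neg,
      Finset.sum_neg_distrib]
  simp only [map_sum, summand, Finset.sum_sub_distrib, Finset.sum_neg_distrib, moment_part,
    neg_neg, ← Finset.smul_sum]
  rw [sub_eq_iff_eq_add, ← add_smul, ← two_mul, mul_inv_cancel₀ two_ne_zero, one_smul]

end Differential

theorem classical_brst_charge_square_zero_general [NeZero (2 : K)] [NeZero (3 : K)]
    [SetLike.GradedMul 𝒲] (h𝒲 : IsSupercommutative 𝒲) (hB : IsSuperBiderivation 𝒲 B)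
    (hf : IsLieStructureConstants f) (hg : IsGhostSystem 𝒲 B ξ η)
    (hμ : IsEquivariantMoment 𝒲 B f ξ η μ) :
    B (brstCharge f ξ η μ) (brstCharge f ξ η μ) = 0 := by
  calc B (brstCharge f ξ η μ) (brstCharge f ξ η μ)
      = B (brstCharge f ξ η μ)
          (-((4 : K)⁻¹ • ∑ c, structureForm f ξ c * η c) + ∑ a, μ a * ξ a) :=
        congrArg _ (brstCharge_eq f ξ η μ)
    _ = -((4 : K)⁻¹ • (2 : K) • ∑ c, μ c * structureForm f ξ c) +
          (2 : K)⁻¹ • ∑ c, μ c * structureForm f ξ c := by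
        rw [map_add, map_neg, map_smul, bracket_brstCharge_cubic h𝒲 hB hf hg hμ,
          bracket_brstCharge_linear h𝒲 hB hg hμ]
    _ = 0 := by rw [smul_smul, inv_four_mul_two, neg_add_cancel]

end Charge

/-- The ring structure on `W` whose product is a given bilinear map. -/
abbrev ringOfBilinear {K W : Type*} [Field K] [addCommGroup : AddCommGroup W] [Module K W]
    (mul : W →ₗ[K] W →ₗ[K] W) (one : W) (one_mul_mul_one : ∀ x, mul one x = x ∧ mul x one = x)
    (mul_assoc : ∀ x y z, mul (mul x y) z = mul x (mul y z)) : Ring W where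
  __ := addCommGroup
  mul x y := mul x y
  one := one
  mul_assoc := mul_assoc
  one_mul x := (one_mul_mul_one x).1
  mul_one x := (one_mul_mul_one x).2
  left_distrib x y z := map_add (mul x) y z
  right_distrib x y z := LinearMap.map_add₂ mul x y z
  zero_mul x := LinearMap.map_zero₂ mul x
  mul_zero x := map_zero (mul x)

/-- **Square-zero of the classical BRST charge for an equivariant moment map.**
Let `g` be a finite-dimensional Lie algebra with structure constants `f_{ab}^c` and
`J : g → C^∞(M)` a Poisson Lie algebra morphism (`{J_a, J_b} = ∑_c f_{ab}^c J_c`).  On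
the graded Poisson algebra `A ⊗ Λ(g ⊕ g*)` with the even super-Poisson bracket `B`
determined by `B ξ_a ξ^b = 2 δ_a^b`, `B ξ_a ξ_b = 0 = B ξ^a ξ^b` and by the Poisson
bracket on `A = C^∞(M)`, the element
`θ = -¼ ∑_{a,b,c} f_{ab}^c ξ^a ξ^b ξ_c + ∑_a J_a ξ^a` satisfies `B θ θ = 0`.
Consequently `D := B θ ·` is a square-zero derivation of degree `+1`.
(Formalized for any graded supercommutative algebra `W` with an even super-Poisson
bracket containing `A` and the ghost/antighost generators with the stated relations.) -/
theorem classical_brst_charge_square_zero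
    (K : Type*) [Field K] [CharZero K]
    -- the Poisson algebra `A = C^∞(M)`
    (A : Type*) [CommRing A] [Algebra K A]
    (P : A →ₗ[K] A →ₗ[K] A)
    (hPanti : ∀ x y : A, P x y = - P y x)
    (hPleib : ∀ x y z : A, P x (y * z) = P x y * z + y * P x z)
    (hPjac : ∀ x y z : A, P x (P y z) = P (P x y) z + P y (P x z))
    -- the graded super-Poisson algebra `W = A ⊗ Λ(g ⊕ g*)`
    (W : Type*) [AddCommGroup W] [Module K W]
    (𝒲 : ℤ → Submodule K W)
    (mul : W →ₗ[K] W →ₗ[K] W) (one : W)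
    (B : W →ₗ[K] W →ₗ[K] W)
    (hone : one ∈ 𝒲 0)
    (honemul : ∀ x : W, mul one x = x ∧ mul x one = x)
    (hmuldeg : ∀ (i j : ℤ), ∀ x ∈ 𝒲 i, ∀ y ∈ 𝒲 j, mul x y ∈ 𝒲 (i + j))
    (hmulcomm : ∀ (i j : ℤ), ∀ x ∈ 𝒲 i, ∀ y ∈ 𝒲 j, mul x y = gsgn K (i * j) • mul y x)
    (hmulassoc : ∀ x y z : W, mul (mul x y) z = mul x (mul y z))
    -- `B` is an even graded Poisson bracket
    (hBdeg : ∀ (i j : ℤ), ∀ x ∈ 𝒲 i, ∀ y ∈ 𝒲 j, B x y ∈ 𝒲 (i + j))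
    (hBanti : ∀ (i j : ℤ), ∀ x ∈ 𝒲 i, ∀ y ∈ 𝒲 j, B x y = - (gsgn K (i * j) • B y x))
    (hBleib : ∀ (i j : ℤ), ∀ x ∈ 𝒲 i, ∀ y ∈ 𝒲 j, ∀ z : W,
      B x (mul y z) = mul (B x y) z + gsgn K (i * j) • mul y (B x z))
    (hBjac : ∀ (i j : ℤ), ∀ x ∈ 𝒲 i, ∀ y ∈ 𝒲 j, ∀ z : W,
      B x (B y z) = B (B x y) z + gsgn K (i * j) • B y (B x z))
    -- the embedding of `A` in degree `0`
    (φ : A →ₗ[K] W)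
    (hφdeg : ∀ x : A, φ x ∈ 𝒲 0)
    (hφone : φ 1 = one)
    (hφmul : ∀ x y : A, φ (x * y) = mul (φ x) (φ y))
    (hφP : ∀ x y : A, B (φ x) (φ y) = φ (P x y))
    -- ghosts (degree `1`) and antighosts (degree `-1`)
    (ℓ : ℕ) (gh ag : Fin ℓ → W)
    (hghdeg : ∀ a, gh a ∈ 𝒲 1) (hagdeg : ∀ a, ag a ∈ 𝒲 (-1))
    -- `{ξ_a, ξ^b} = 2 δ_a^b`, `{ξ_a, ξ_b} = 0 = {ξ^a, ξ^b}`
    (hBag : ∀ a b, B (ag a) (gh b) = if a = b then (2 : K) • one else 0)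
    (hBgh : ∀ a b, B (gh a) (gh b) = 0)
    (hBagag : ∀ a b, B (ag a) (ag b) = 0)
    (hBAgh : ∀ (x : A) (a : Fin ℓ), B (φ x) (gh a) = 0)
    (hBAag : ∀ (x : A) (a : Fin ℓ), B (φ x) (ag a) = 0)
    -- the structure constants and the equivariant moment map
    (f : Fin ℓ → Fin ℓ → Fin ℓ → K)
    (hfanti : ∀ a b c, f a b c = - f b a c)
    (hfjac : ∀ a b c d,
      (∑ e, (f a b e * f e c d + f b c e * f e a d + f c a e * f e b d)) = 0)
    (J : Fin ℓ → A)
    (hJ : ∀ a b, P (J a) (J b) = ∑ c, f a b c • J c) :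
    (let θ : W :=
      - ((4 : K)⁻¹ • (∑ a, ∑ b, ∑ c, f a b c • mul (gh a) (mul (gh b) (ag c))))
      + ∑ a, mul (φ (J a)) (gh a)
     B θ θ = 0) := by
  let _ : Ring W := ringOfBilinear mul one honemul hmulassoc
  let _ : Algebra K W := Algebra.ofModule (LinearMap.map_smul₂ mul) fun c x y ↦ map_smul (mul x) c y
  have _ : SetLike.GradedMul 𝒲 := ⟨fun {i j x y} hx hy ↦ hmuldeg i j x hx y hy⟩
  exact classical_brst_charge_square_zero_general (𝒲 := 𝒲) (B := B) (μ := fun a ↦ φ (J a))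
    hmulcomm ⟨hBanti, hBleib⟩ ⟨hfanti, hfjac⟩ ⟨hghdeg, hagdeg, hBag, hBgh, hBagag⟩
    ⟨fun a ↦ hφdeg (J a), fun a b ↦ hBAgh (J a) b, fun a b ↦ hBAag (J a) b,
      fun a b ↦ by rw [hφP, hJ, map_sum]; simp only [map_smul]⟩
end
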